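/- Regular hyperlanguages are closed under intersection: for every two NFH 𝓐₁ (with k variables) and 𝓐₂ (with k′ variables) over the same alphabet Σ, there exists an NFH 𝓐∩ over Σ with k + k′ variables, whose quantification condition is the concatenation α₁·α₂ of the conditions of 𝓐₁ and 𝓐₂ and whose number of states is polynomial in the numbers of states of 𝓐₁ and 𝓐₂, such that 𝓛(𝓐∩) = 𝓛(𝓐₁) ∩ 𝓛(𝓐₂). -/

import Mathlib

/-- The length of the longest word in a `k`-tuple of words. -/
def maxLen {α : Type} {k : ℕ} (v : Fin k → List α) : ℕ :=
  Finset.univ.sup fun i => (v i).length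

/-- `zip` of a `k`-tuple of words over `α`: the word over `k`-tuples of
`Option α`, where `none` plays the role of the padding symbol `#`. Its length
is the length of the longest word, and its `j`-th letter has `i`-th component
the `j`-th letter of the `i`-th word (or `#` = `none` if that word has ended). -/
def zipWord {α : Type} {k : ℕ} (v : Fin k → List α) : List (Fin k → Option α) :=
  (List.range (maxLen v)).map fun j i => (v i)[j]?

/-- A nondeterministic finite hyperautomaton (NFH) with `k` word variables:
an NFA over the alphabet of `k`-tuples `(Σ ∪ {#})ᵏ` together with a
quantification condition, where the `i`-th quantifier binds the `i`-th
variable (`true` = ∃, `false` = ∀). -/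
structure NFH (α σ : Type) (k : ℕ) where
  quant : Fin k → Bool
  aut : NFA (Fin k → Option α) σ

/-- Satisfaction of the suffix `𝔔ᵢ₊₁xᵢ₊₁ ⋯ 𝔔ₖxₖ` of the quantification
condition by a hyperword `S`, given a partial assignment `v` to the first `i`
variables: when all variables are assigned, the underlying NFA must accept the
zip of the assignment. -/
def NFH.SatFrom {α σ : Type} {k : ℕ} (A : NFH α σ k) (S : Set (List α)) :
    ℕ → (Fin k → List α) → Prop
  | i, v =>
    if h : i < k then
      if A.quant ⟨i, h⟩ then
        ∃ w ∈ S, A.SatFrom S (i + 1) (Function.update v ⟨i, h⟩ w)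
      else
        ∀ w ∈ S, A.SatFrom S (i + 1) (Function.update v ⟨i, h⟩ w)
    else
      zipWord v ∈ A.aut.accepts
  termination_by i _ => k - i
  decreasing_by all_goals omega

/-- A hyperword `S` is accepted by the NFH `A` if it satisfies the full
quantification condition of `A`. -/
def NFH.Accepts {α σ : Type} {k : ℕ} (A : NFH α σ k) (S : Set (List α)) : Prop :=
  A.SatFrom S 0 fun _ => []

/-- The hyperlanguage of an NFH: the set of all nonempty hyperwords it accepts. -/
def NFH.hyperLang {α σ : Type} {k : ℕ} (A : NFH α σ k) : Set (Set (List α)) :=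
  { S | S.Nonempty ∧ A.Accepts S }

/-!
Both automata run in parallel on the zip of all `k + k'` words, each reading only its own block of
components. If one block of words is shorter than the other, its components end in letters that
consist of padding only. Such letters never occur in a zip of that block alone, so the automaton of
the block may skip them, and it then sees exactly the zip of its own words.

On the logical side, `𝔔x (φ ∧ C)` is equivalent to `(𝔔x φ) ∧ C` if `x` is not free in `C`; for
`𝔔 = ∀` this uses that the hyperword is nonempty. Applied to one quantifier after another,
from the innermost outwards, this gives `α₁α₂ (φ₁ ∧ φ₂) ↔ α₁ φ₁ ∧ α₂ φ₂`.
-/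

section Automata

variable {α β σ τ : Type*}

/-- The product automaton, running two automata in parallel on the same word. -/
def prodNFA (M : NFA α σ) (N : NFA α τ) : NFA α (σ × τ) where
  step s a := M.step s.1 a ×ˢ N.step s.2 a
  start := M.start ×ˢ N.start
  accept := M.accept ×ˢ N.accept

theorem prodNFA_stepSet (M : NFA α σ) (N : NFA α τ) (S : Set σ) (T : Set τ) (a : α) :
    (prodNFA M N).stepSet (S ×ˢ T) a = M.stepSet S a ×ˢ N.stepSet T a := by
  ext ⟨s, t⟩
  simp only [prodNFA, NFA.mem_stepSet, Set.mem_prod, Prod.exists]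
  tauto

theorem prodNFA_evalFrom (M : NFA α σ) (N : NFA α τ) (S : Set σ) (T : Set τ) (w : List α) :
    (prodNFA M N).evalFrom (S ×ˢ T) w = M.evalFrom S w ×ˢ N.evalFrom T w := by
  induction w generalizing S T with
  | nil => rfl
  | cons a w ih => simp only [NFA.evalFrom_cons, prodNFA_stepSet, ih]

theorem mem_accepts_prodNFA (M : NFA α σ) (N : NFA α τ) (w : List α) :
    w ∈ (prodNFA M N).accepts ↔ w ∈ M.accepts ∧ w ∈ N.accepts := by
  have h := prodNFA_evalFrom M N M.start N.start w
  simp only [NFA.mem_accepts, show (prodNFA M N).start = M.start ×ˢ N.start from rfl, h]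
  simp only [prodNFA, Set.mem_prod, Prod.exists]
  tauto

/-- The automaton over `β` that simulates `M` along a partial map of letters `f`: it stays put on
the letters that `f` erases, so it accepts the inverse image of the language of `M` under the
induced map of words `List.filterMap f`. -/
def erasingComap (f : β → Option α) (M : NFA α σ) : NFA β σ where
  step s b := (f b).elim {s} (M.step s)
  start := M.start
  accept := M.accept

theorem erasingComap_stepSet (f : β → Option α) (M : NFA α σ) (S : Set σ) (b : β) :
    (erasingComap f M).stepSet S b = (f b).elim S (M.stepSet S) := by
  cases h : f b <;> simp [NFA.stepSet, erasingComap, h]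

theorem erasingComap_evalFrom (f : β → Option α) (M : NFA α σ) (S : Set σ) (w : List β) :
    (erasingComap f M).evalFrom S w = M.evalFrom S (w.filterMap f) := by
  induction w generalizing S with
  | nil => rfl
  | cons b w ih =>
    rw [NFA.evalFrom_cons, ih, erasingComap_stepSet, List.filterMap_cons]
    cases f b <;> rfl

theorem mem_accepts_erasingComap (f : β → Option α) (M : NFA α σ) (w : List β) :
    w ∈ (erasingComap f M).accepts ↔ w.filterMap f ∈ M.accepts := by
  simp only [NFA.mem_accepts, erasingComap_evalFrom]
  rfl

end Automata

section Zip

variable {α : Type} {k n : ℕ}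

theorem lt_maxLen_iff (v : Fin k → List α) (j : ℕ) : j < maxLen v ↔ ∃ i, j < (v i).length := by
  simp [maxLen, Finset.lt_sup_iff]

theorem maxLen_comp_le (v : Fin n → List α) (e : Fin k → Fin n) : maxLen (v ∘ e) ≤ maxLen v :=
  Finset.sup_le fun i _ => Finset.le_sup (f := fun i => (v i).length) (Finset.mem_univ (e i))

/-- The restriction of a letter over `n`-tuples to the components listed by `e`. It is `none` when
all these components are padding, because no such letter occurs in a zip of `k` words. -/
def restrictLetter (e : Fin k → Fin n) (a : Fin n → Option α) : Option (Fin k → Option α) :=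
  Option.guard (fun b => ∃ i, (b i).isSome) (a ∘ e)

theorem filterMap_restrictLetter_zipWord (v : Fin n → List α) (e : Fin k → Fin n) :
    (zipWord v).filterMap (restrictLetter e) = zipWord (v ∘ e) := by
  let letter (j : ℕ) (i : Fin k) : Option α := (v (e i))[j]?
  have isSome_letter (j : ℕ) : (∃ i, (letter j i).isSome) ↔ j < maxLen (v ∘ e) := by
    simp [letter, lt_maxLen_iff]
  calc (zipWord v).filterMap (restrictLetter e)
      = ((List.range (maxLen v)).map letter).filter fun b => ∃ i, (b i).isSome := by
        rw [← List.filterMap_eq_filter, List.filterMap_map, zipWord, List.filterMap_map]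
        rfl
    _ = ((List.range (maxLen v)).filter fun j => j < maxLen (v ∘ e)).map letter := by
        simp only [List.filter_map, Function.comp_def, isSome_letter]
    _ = zipWord (v ∘ e) := by
        rw [← List.Ico.zero_bot, List.Ico.filter_lt_of_ge (maxLen_comp_le v e), List.Ico.zero_bot]
        rfl

end Zip

section Append

variable {β : Type*} {m n : ℕ}

theorem castAdd_ne_natAdd (i : Fin m) (j : Fin n) : Fin.castAdd n i ≠ Fin.natAdd m j :=
  Fin.ne_of_lt (i.isLt.trans_le (Nat.le_add_right m j))

theorem append_update_left (u : Fin m → β) (v : Fin n → β) (i : Fin m) (w : β) :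
    Fin.append (Function.update u i w) v =
      Function.update (Fin.append u v) (Fin.castAdd n i) w := by
  funext j
  induction j using Fin.addCases with
  | left j => simp [Function.update_apply]
  | right j => simp [(castAdd_ne_natAdd i j).symm]

theorem append_update_right (u : Fin m → β) (v : Fin n → β) (i : Fin n) (w : β) :
    Fin.append u (Function.update v i w) =
      Function.update (Fin.append u v) (Fin.natAdd m i) w := by
  funext j
  induction j using Fin.addCases with
  | left j => simp [castAdd_ne_natAdd j i]
  | right j => simp [Function.update_apply]

end Append

namespace NFH

/-- Quantification over a set, existential for `true` and universal for `false`. -/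
def BoundedQuant {β : Type*} (b : Bool) (S : Set β) (P : β → Prop) : Prop :=
  if b then ∃ w ∈ S, P w else ∀ w ∈ S, P w

theorem boundedQuant_and_right {β : Type*} (b : Bool) {S : Set β} (hS : S.Nonempty)
    (P : β → Prop) (c : Prop) :
    BoundedQuant b S (fun w => P w ∧ c) ↔ BoundedQuant b S P ∧ c := by
  obtain ⟨w₀, hw₀⟩ := hS
  cases b
  · simp only [BoundedQuant, Bool.false_eq_true, if_false]
    exact ⟨fun h => ⟨fun w hw => (h w hw).1, (h w₀ hw₀).2⟩, fun h w hw => ⟨h.1 w hw, h.2⟩⟩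
  · simp only [BoundedQuant, if_true, ← and_assoc, exists_and_right]

variable {α σ σ₁ σ₂ : Type} {k k' : ℕ}

theorem satFrom_val (A : NFH α σ k) (S : Set (List α)) (i : Fin k) (v : Fin k → List α) :
    A.SatFrom S i v ↔
      BoundedQuant (A.quant i) S fun w => A.SatFrom S (i + 1) (Function.update v i w) := by
  rw [SatFrom, dif_pos i.isLt, BoundedQuant]

theorem satFrom_numVars (A : NFH α σ k) (S : Set (List α)) (v : Fin k → List α) :
    A.SatFrom S k v ↔ zipWord v ∈ A.aut.accepts := by
  rw [SatFrom, dif_neg (lt_irrefl k)]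

/-- The intersection hyperautomaton: the conditions are concatenated, and the two automata run in
parallel, each on its own block of variables until all words of that block have ended. -/
def inter (A₁ : NFH α σ₁ k) (A₂ : NFH α σ₂ k') : NFH α (σ₁ × σ₂) (k + k') where
  quant := Fin.append A₁.quant A₂.quant
  aut := prodNFA (erasingComap (restrictLetter (Fin.castAdd k')) A₁.aut)
    (erasingComap (restrictLetter (Fin.natAdd k)) A₂.aut)

variable (A₁ : NFH α σ₁ k) (A₂ : NFH α σ₂ k')

theorem zipWord_append_mem_accepts_inter (u : Fin k → List α) (v : Fin k' → List α) :
    zipWord (Fin.append u v) ∈ (A₁.inter A₂).aut.accepts ↔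
      zipWord u ∈ A₁.aut.accepts ∧ zipWord v ∈ A₂.aut.accepts := by
  have left : Fin.append u v ∘ Fin.castAdd k' = u := funext (Fin.append_left u v)
  have right : Fin.append u v ∘ Fin.natAdd k = v := funext (Fin.append_right u v)
  simp only [inter, mem_accepts_prodNFA, mem_accepts_erasingComap,
    filterMap_restrictLetter_zipWord, left, right]

variable {S : Set (List α)}

theorem satFrom_inter_right (hS : S.Nonempty) (u : Fin k → List α) (v : Fin k' → List α)
    {i : ℕ} (hi : i ≤ k') :
    (A₁.inter A₂).SatFrom S (k + i) (Fin.append u v) ↔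
      A₂.SatFrom S i v ∧ zipWord u ∈ A₁.aut.accepts := by
  induction hi using Nat.decreasingInduction generalizing v with
  | self => rw [satFrom_numVars, satFrom_numVars, zipWord_append_mem_accepts_inter, and_comm]
  | of_succ i hi ih =>
    have quant_eq : (A₁.inter A₂).quant (Fin.natAdd k ⟨i, hi⟩) = A₂.quant ⟨i, hi⟩ :=
      Fin.append_right ..
    rw [satFrom_val A₂ S ⟨i, hi⟩, ← boundedQuant_and_right _ hS, ← quant_eq]
    simp only [← ih, append_update_right]
    exact satFrom_val (A₁.inter A₂) S (Fin.natAdd k ⟨i, hi⟩) _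

theorem satFrom_inter_left (hS : S.Nonempty) (u : Fin k → List α) (v : Fin k' → List α)
    {i : ℕ} (hi : i ≤ k) :
    (A₁.inter A₂).SatFrom S i (Fin.append u v) ↔ A₁.SatFrom S i u ∧ A₂.SatFrom S 0 v := by
  induction hi using Nat.decreasingInduction generalizing u with
  | self =>
    rw [satFrom_numVars, and_comm]
    exact satFrom_inter_right A₁ A₂ hS u v (Nat.zero_le k')
  | of_succ i hi ih =>
    have quant_eq : (A₁.inter A₂).quant (Fin.castAdd k' ⟨i, hi⟩) = A₁.quant ⟨i, hi⟩ :=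
      Fin.append_left ..
    rw [satFrom_val A₁ S ⟨i, hi⟩, ← boundedQuant_and_right _ hS, ← quant_eq]
    simp only [← ih, append_update_left]
    exact satFrom_val (A₁.inter A₂) S (Fin.castAdd k' ⟨i, hi⟩) _

theorem accepts_inter (hS : S.Nonempty) :
    (A₁.inter A₂).Accepts S ↔ A₁.Accepts S ∧ A₂.Accepts S := by
  have := satFrom_inter_left A₁ A₂ hS (fun _ => []) (fun _ => []) (Nat.zero_le k)
  rwa [Fin.append_castAdd_natAdd (f := fun _ => [])] at this

theorem hyperLang_inter : (A₁.inter A₂).hyperLang = A₁.hyperLang ∩ A₂.hyperLang := by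
  ext S
  exact (and_congr_right (accepts_inter A₁ A₂)).trans and_and_left

end NFH

/-- **Closure under intersection.** For NFH `A₁` (with `k` variables) and `A₂`
(with `k'` variables) over the same alphabet, there is an NFH with `k + k'`
variables whose quantification condition is the concatenation of those of `A₁`
and `A₂`, whose number of states is polynomial (at most
`(|σ₁| + 1) * (|σ₂| + 1)`) in the numbers of states of `A₁` and `A₂`, and whose
hyperlanguage is `𝓛(A₁) ∩ 𝓛(A₂)`. -/
theorem nfh_closure_intersection {α σ₁ σ₂ : Type} [Fintype σ₁] [Fintype σ₂]
    {k k' : ℕ} (A₁ : NFH α σ₁ k) (A₂ : NFH α σ₂ k') :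
    ∃ (σ : Type) (inst : Fintype σ) (A : NFH α σ (k + k')),
      @Fintype.card σ inst ≤ (Fintype.card σ₁ + 1) * (Fintype.card σ₂ + 1) ∧
      A.quant = Fin.append A₁.quant A₂.quant ∧
      A.hyperLang = A₁.hyperLang ∩ A₂.hyperLang := by
  refine ⟨σ₁ × σ₂, inferInstance, A₁.inter A₂, ?_, rfl, A₁.hyperLang_inter A₂⟩
  rw [Fintype.card_prod]
  exact Nat.mul_le_mul (Nat.le_succ _) (Nat.le_succ _)
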